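/- Write (ρ₁,…,ρ₁₄) = (x₁,…,x₇, l₁ξ,…,l₇ξ), where x₁,…,x₇ are the points and l₁,…,l₇ the lines of D, and let ρ̄ = (ρ₁+…+ρ₁₄)/14 be the Weyl vector. Then: (i) for s ≠ t, ⟨ρ_s,ρ_t⟩ = √2 if the corresponding nodes are joined in the diagram D and 0 otherwise; (ii) ⟨ρ̄, ρ_s⟩ = ⟨ρ̄,ρ̄⟩ = 1/(2+3√2) for every s = 1,…,14; (iii) ⟨w_P,w_P⟩ = ⟨w_L,w_L⟩ = 2 and ⟨ρ̄, w_P⟩ = ⟨ρ̄, w_Lξ⟩ = 1/√2. -/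

import Mathlib

/- Formalization over the ring ℋ of Hurwitz integers inside the real quaternions. -/

noncomputable section
open Quaternion Finset

/-- The real quaternions ℍ. -/
abbrev Quat := Quaternion ℝ

/-- The quaternion `i`. -/
def qi : Quat := ⟨0, 1, 0, 0⟩
/-- The quaternion `j`. -/
def qj : Quat := ⟨0, 0, 1, 0⟩
/-- The quaternion `k`. -/
def qk : Quat := ⟨0, 0, 0, 1⟩
/-- `p = 1 - i`. -/
def qp : Quat := 1 - qi

/-- A quaternion is a Hurwitz integer if it is `(a+bi+cj+dk)/2` with
`a,b,c,d` integers which are all congruent mod `2`. -/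
def IsHurwitz (q : Quat) : Prop :=
  ∃ a b c d : ℤ, a % 2 = b % 2 ∧ b % 2 = c % 2 ∧ c % 2 = d % 2 ∧
    q = ⟨(a : ℝ) / 2, (b : ℝ) / 2, (c : ℝ) / 2, (d : ℝ) / 2⟩

/-- A unit of the ring ℋ of Hurwitz integers. -/
def IsUnitH (q : Quat) : Prop :=
  IsHurwitz q ∧ ∃ r : Quat, IsHurwitz r ∧ q * r = 1 ∧ r * q = 1

/-- Membership in the (two-sided) ideal `pℋ`. -/
def InPH (q : Quat) : Prop := ∃ h : Quat, IsHurwitz h ∧ q = qp * h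

/-- The ambient space of the lattice `L = 3E₈ ⊕ H`: three pairs (the `E₈` summands)
together with the two coordinates of the hyperbolic cell `H`. -/
abbrev V3 : Type := (Fin 3 → Quat × Quat) × Quat × Quat

/-- The ℋ-valued form on `3E₈ ⊕ H`:  negative definite standard form on each `E₈`
summand and the hyperbolic form `⟨(x₁,x₂),(y₁,y₂)⟩ = x̄₁ p̄ y₂ + x̄₂ p y₁` on `H`. -/
def ip3 (x y : V3) : Quat :=
  (∑ s : Fin 3, (-(star (x.1 s).1 * (y.1 s).1) - star (x.1 s).2 * (y.1 s).2))
    + star x.2.1 * star qp * y.2.2 + star x.2.2 * qp * y.2.1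

/-- Membership in the `E₈` lattice: both coordinates Hurwitz and congruent mod `pℋ`. -/
def memE8 (q : Quat × Quat) : Prop := IsHurwitz q.1 ∧ IsHurwitz q.2 ∧ InPH (q.1 - q.2)

/-- Membership in the lattice `L = 3E₈ ⊕ H`. -/
def memL3 (v : V3) : Prop := (∀ s, memE8 (v.1 s)) ∧ IsHurwitz v.2.1 ∧ IsHurwitz v.2.2

/-- Right scalar multiplication on the ambient space of `3E₈ ⊕ H`. -/
def rmul3 (v : V3) (q : Quat) : V3 :=
  (fun s => ((v.1 s).1 * q, (v.1 s).2 * q), v.2.1 * q, v.2.2 * q)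

/-- The `μ`-reflection in a root `r` : `v ↦ v − r(1−μ)⟨r,v⟩/|r|²`. -/
def refl3 (r : V3) (μ : Quat) (v : V3) : V3 := v - rmul3 r ((1 - μ) * ip3 r v / ip3 r r)

/-- The root `a` of the diagram `D`. -/
def rootA : V3 := (fun _ => (0, 0), 1, -1)
/-- The roots `c_s` of the diagram `D`. -/
def rootC (s : Fin 3) : V3 := (fun t => if t = s then ((1 : Quat), (-1 : Quat)) else 0, 0, 0)
/-- The roots `e_s` of the diagram `D` (with `(1,1)` in the two other `E₈` slots). -/
def rootE (s : Fin 3) : V3 := (fun t => if t = s then (0 : Quat × Quat) else (1, 1), -qi, -1)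
/-- The root `f` of the diagram `D`. -/
def rootF : V3 := (fun _ => (0, qp), -(qi * qp), -qp)
/-- The roots `b_s` of the diagram `D`. -/
def rootB (s : Fin 3) : V3 := (fun t => if t = s then ((0 : Quat), qp) else 0, -1, 0)
/-- The roots `d_s` of the diagram `D`. -/
def rootD (s : Fin 3) : V3 := (fun t => if t = s then (-qp, (0 : Quat)) else 0, 0, 0)

/-- The set of roots of `L`. -/
def Roots3 : Set V3 := {r | memL3 r ∧ ip3 r r = -2}

/-- The reflection group `R(L)` of `L = 3E₈ ⊕ H`, as the subgroup of permutations of the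
ambient space generated by the `μ`-reflections in all roots of `L` (for all units `μ ≠ 1`). -/
def RL3 : Subgroup (Equiv.Perm V3) :=
  Subgroup.closure {g | ∃ r μ, r ∈ Roots3 ∧ IsUnitH μ ∧ μ ≠ 1 ∧ ∀ v, g v = refl3 r μ v}

/-- The seven `points` of the diagram `D`. -/
def Pt : Fin 7 → V3 := ![rootA, rootC 0, rootC 1, rootC 2, rootE 0, rootE 1, rootE 2]
/-- The seven `lines` of the diagram `D`. -/
def Ln : Fin 7 → V3 := ![rootF, rootB 0, rootB 1, rootB 2, rootD 0, rootD 1, rootD 2]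

open Classical in
/-- `w_P = l p̄ + Σ_{x incident to l} x`, computed from the line `Ln s`. -/
def wPof (s : Fin 7) : V3 :=
  rmul3 (Ln s) (star qp) + ∑ t : Fin 7, if ip3 (Pt t) (Ln s) = qp then Pt t else 0

open Classical in
/-- `w_L = x p + Σ_{l incident to x} l`, computed from the point `Pt t`. -/
def wLof (t : Fin 7) : V3 :=
  rmul3 (Pt t) qp + ∑ s : Fin 7, if ip3 (Pt t) (Ln s) = qp then Ln s else 0

/-- `ξ = (1+i)/√2`. -/
def xi : Quat := (1 + qi) * ((Real.sqrt 2 : ℝ) : Quat)⁻¹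

/-- `(ρ₁,…,ρ₁₄) = (x₁,…,x₇, l₁ξ,…,l₇ξ)`. -/
def rho : Fin 14 → V3 := fun t =>
  if h : (t : ℕ) < 7 then Pt ⟨t, h⟩ else rmul3 (Ln ⟨(t : ℕ) - 7, by omega⟩) xi

/-- The Weyl vector `ρ̄ = (ρ₁ + … + ρ₁₄)/14`. -/
def rhobar : V3 := (14 : ℝ)⁻¹ • (∑ t : Fin 14, rho t)

/-- `√2` as a quaternion. -/
def sqrt2 : Quat := ((Real.sqrt 2 : ℝ) : Quat)

/-- `w_P` (computed from the line `f`). -/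
def wP : V3 := wPof 0
/-- `w_L` (computed from the point `a`). -/
def wL : V3 := wLof 0

/-! Each root in `D` has norm `-2`, and distinct ones pair to `p` (a point with an incident line),
to `p̄`, or to `0`. Since `pξ = √2` and `ξ̄ξ = 1`, rescaling the lines by `ξ` makes the Gram
matrix of the `ρ_s` equal to `-2 + √2 A`, with `A` the adjacency matrix of the `3`-regular graph
`D`. Hence `⟨∑ ρ_t, ρ_s⟩ = -2 + 3√2` for each `s`, and `(-2 + 3√2)(2 + 3√2) = 14`. The vectors
`w_P` and `w_L` are combinations `yq̄ + x₁ + x₂ + x₃` of a node `y` with its three neighbours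
`x_i`, where `q = ⟨x_i, y⟩` satisfies `|q|² = 2`. -/

section Form

variable (x y z : V3)

lemma star_ip3 : star (ip3 x y) = ip3 y x := by
  simp only [ip3, star_add, star_sum, star_sub, star_neg, star_mul, star_star, mul_assoc]
  abel

lemma ip3_add_right : ip3 x (y + z) = ip3 x y + ip3 x z := by
  simp only [ip3, Fin.sum_univ_three, Prod.fst_add, Prod.snd_add, Pi.add_apply, mul_add]
  abel

lemma ip3_add_left : ip3 (x + y) z = ip3 x z + ip3 y z := by
  rw [← star_ip3, ip3_add_right, star_add, star_ip3, star_ip3]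

lemma ip3_sum_right {ι : Type*} (S : Finset ι) (f : ι → V3) :
    ip3 x (∑ i ∈ S, f i) = ∑ i ∈ S, ip3 x (f i) :=
  map_sum (AddMonoidHom.mk' (ip3 x) (ip3_add_right x)) f S

lemma ip3_sum_left {ι : Type*} (S : Finset ι) (f : ι → V3) :
    ip3 (∑ i ∈ S, f i) y = ∑ i ∈ S, ip3 (f i) y :=
  map_sum (AddMonoidHom.mk' (ip3 · y) (ip3_add_left · · y)) f S

lemma ip3_rmul3_right (q : Quat) : ip3 x (rmul3 y q) = ip3 x y * q := by
  simp only [ip3, rmul3, add_mul, sum_mul, sub_mul, neg_mul, mul_assoc]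

lemma ip3_rmul3_left (q : Quat) : ip3 (rmul3 x q) y = star q * ip3 x y := by
  rw [← star_ip3, ip3_rmul3_right, star_mul, star_ip3]

lemma rmul3_rmul3 (q r : Quat) : rmul3 (rmul3 x q) r = rmul3 x (q * r) := by
  simp only [rmul3, mul_assoc]

lemma rmul3_coe (r : ℝ) : rmul3 x (r : Quat) = r • x := by
  simp only [rmul3, Quaternion.mul_coe_eq_smul]
  rfl

lemma ip3_smul_right (r : ℝ) : ip3 x (r • y) = r • ip3 x y := by
  rw [← rmul3_coe, ip3_rmul3_right, Quaternion.mul_coe_eq_smul]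

lemma ip3_smul_left (r : ℝ) : ip3 (r • x) y = r • ip3 x y := by
  rw [← rmul3_coe, ip3_rmul3_left, Quaternion.star_coe, Quaternion.coe_mul_eq_smul]

end Form

lemma ip3_self_rmul3_star_add_sum {ι : Type*} [DecidableEq ι] {S : Finset ι} {x : ι → V3} {y : V3}
    {q : Quat} {n : ℝ} (hy : ip3 y y = n)
    (hx : ∀ i ∈ S, ∀ j ∈ S, ip3 (x i) (x j) = if i = j then (n : Quat) else 0)
    (hxy : ∀ i ∈ S, ip3 (x i) y = q) :
    ip3 (rmul3 y (star q) + ∑ i ∈ S, x i) (rmul3 y (star q) + ∑ i ∈ S, x i) =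
      ((n * normSq q + #S * (2 * normSq q + n) : ℝ) : Quat) := by
  have hyy : ip3 (rmul3 y (star q)) (rmul3 y (star q)) = ((n * normSq q : ℝ) : Quat) := by
    rw [ip3_rmul3_left, ip3_rmul3_right, hy, star_star, ← mul_assoc, ← Quaternion.coe_commutes,
      mul_assoc, Quaternion.self_mul_star, Quaternion.coe_mul]
  have hsum_y : ip3 (∑ i ∈ S, x i) (rmul3 y (star q)) = ((#S * normSq q : ℝ) : Quat) := by
    rw [ip3_rmul3_right, ip3_sum_left, sum_congr rfl hxy, sum_const, smul_mul_assoc,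
      Quaternion.self_mul_star, nsmul_eq_mul, Quaternion.coe_mul, Quaternion.coe_natCast]
  have hy_sum : ip3 (rmul3 y (star q)) (∑ i ∈ S, x i) = ((#S * normSq q : ℝ) : Quat) := by
    rw [← star_ip3, hsum_y, Quaternion.star_coe]
  have hsum_sum : ip3 (∑ i ∈ S, x i) (∑ i ∈ S, x i) = ((#S * n : ℝ) : Quat) := by
    have hrow : ∀ i ∈ S, ip3 (x i) (∑ j ∈ S, x j) = n := fun i hi => by
      rw [ip3_sum_right, sum_congr rfl (hx i hi), sum_ite_eq, if_pos hi]
    rw [ip3_sum_left, sum_congr rfl hrow, sum_const, nsmul_eq_mul, Quaternion.coe_mul,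
      Quaternion.coe_natCast]
  rw [ip3_add_left, ip3_add_right, ip3_add_right, hyy, hy_sum, hsum_y, hsum_sum]
  simp only [← Quaternion.coe_add]
  congr 1
  ring

section Scalars

@[simp, norm_cast]
lemma quat_coe_ofNat (n : ℕ) [n.AtLeastTwo] :
    ((ofNat(n) : ℝ) : Quat) = ofNat(n) := rfl

@[simp] lemma re_qi : qi.re = 0 := rfl
@[simp] lemma imI_qi : qi.imI = 1 := rfl
@[simp] lemma imJ_qi : qi.imJ = 0 := rfl
@[simp] lemma imK_qi : qi.imK = 0 := rfl

lemma star_qi : star qi = -qi := by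
  ext <;> simp

lemma qi_mul_qi : qi * qi = -1 := by
  ext <;> simp

lemma star_qp : star qp = 1 + qi := by
  rw [qp, star_sub, star_one, star_qi, sub_neg_eq_add]

lemma qp_mul_qi : qp * qi = star qp := by
  ext <;> simp [qp]

lemma normSq_qp : normSq qp = 2 := by
  simp [Quaternion.normSq_def', qp, one_add_one_eq_two]

lemma star_qp_mul_qp : star qp * qp = 2 := by
  rw [Quaternion.star_mul_self, normSq_qp, quat_coe_ofNat]

lemma qp_ne_zero : qp ≠ 0 := by
  rw [← Quaternion.normSq_ne_zero, normSq_qp]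
  exact two_ne_zero

lemma sqrt2_mul_sqrt2 : sqrt2 * sqrt2 = 2 := by
  rw [sqrt2, ← Quaternion.coe_mul, Real.mul_self_sqrt zero_le_two, quat_coe_ofNat]

lemma sqrt2_ne_zero : sqrt2 ≠ 0 :=
  Quaternion.coe_injective.ne (Real.sqrt_ne_zero'.mpr two_pos)

lemma star_sqrt2 : star sqrt2 = sqrt2 :=
  Quaternion.star_coe _

lemma xi_mul_sqrt2 : xi * sqrt2 = star qp := by
  rw [xi, star_qp]
  exact inv_mul_cancel_right₀ sqrt2_ne_zero _

lemma qp_mul_xi : qp * xi = sqrt2 := by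
  apply mul_right_cancel₀ sqrt2_ne_zero
  rw [mul_assoc, xi_mul_sqrt2, Quaternion.self_mul_star, normSq_qp, sqrt2_mul_sqrt2,
    quat_coe_ofNat]

lemma star_xi_mul_star_qp : star xi * star qp = sqrt2 := by
  rw [← star_mul, qp_mul_xi, star_sqrt2]

lemma star_xi_mul_xi : star xi * xi = 1 := by
  apply mul_right_cancel₀ sqrt2_ne_zero
  rw [mul_assoc, xi_mul_sqrt2, star_xi_mul_star_qp, one_mul]

end Scalars

section Diagram

/-- Incidence in `P²(𝔽₂)` between the `s`-th point and the `t`-th line, in the order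
`a, c₁, c₂, c₃, e₁, e₂, e₃` of `Pt` and `f, b₁, b₂, b₃, d₁, d₂, d₃` of `Ln`. It is given by the
set of lines through each point, which makes it decidable. -/
def Incident (s t : Fin 7) : Prop :=
  t ∈ (![{1, 2, 3}, {0, 1, 4}, {0, 2, 5}, {0, 3, 6}, {1, 5, 6}, {2, 4, 6}, {3, 4, 5}] :
    Fin 7 → Finset (Fin 7)) s

instance : DecidableRel Incident := fun _ _ => inferInstanceAs (Decidable (_ ∈ _))

lemma card_lines_through (s : Fin 7) : #{t | Incident s t} = 3 := by
  decide +revert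

lemma card_points_on (t : Fin 7) : #{s | Incident s t} = 3 := by
  decide +revert

section Pairings

variable (x : V3) (s : Fin 3)

lemma ip3_rootA_right : ip3 x rootA = star x.2.2 * qp - star x.2.1 * star qp := by
  simp [ip3, rootA, sub_eq_neg_add]

lemma ip3_rootC_right : ip3 x (rootC s) = -star (x.1 s).1 + star (x.1 s).2 := by
  rw [ip3, sum_eq_single s] <;> simp +contextual [rootC]

lemma ip3_rootE_right : ip3 x (rootE s) =
    -(∑ t with t ≠ s, (star (x.1 t).1 + star (x.1 t).2)) -
      (star x.2.1 + star x.2.2) * star qp := by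
  have hslots : ∀ t, -(star (x.1 t).1 * ((rootE s).1 t).1) - star (x.1 t).2 * ((rootE s).1 t).2 =
      if t ≠ s then -(star (x.1 t).1 + star (x.1 t).2) else 0 := fun t => by
    by_cases h : t = s <;> simp [rootE, h, sub_eq_add_neg, add_comm]
  simp only [ip3, hslots, ← sum_filter, sum_neg_distrib, mul_assoc]
  simp only [rootE, mul_neg, mul_one, qp_mul_qi, add_mul]
  abel

lemma ip3_rootF_right : ip3 x rootF =
    -(∑ t, star (x.1 t).2 * qp) - (star x.2.1 + star x.2.2) * 2 := by
  simp only [ip3, rootF, mul_assoc, mul_neg, ← mul_assoc qp qi qp, qp_mul_qi, star_qp_mul_qp]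
  simp only [add_mul, mul_zero, neg_zero, sum_neg_distrib, zero_sub]
  abel

lemma ip3_rootB_right : ip3 x (rootB s) = -(star (x.1 s).2 * qp) - star x.2.2 * qp := by
  simp [ip3, rootB, apply_ite, sub_eq_add_neg]

lemma ip3_rootD_right : ip3 x (rootD s) = star (x.1 s).1 * qp := by
  simp [ip3, rootD, apply_ite]

end Pairings

lemma ip3_pt_pt (s t : Fin 7) : ip3 (Pt s) (Pt t) = if s = t then -2 else 0 := by
  fin_cases s <;> fin_cases t <;>
    simp only [Pt, Fin.reduceFinMk, Matrix.cons_val, ip3_rootA_right, ip3_rootC_right,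
      ip3_rootE_right] <;>
    simp [rootA, rootC, rootE, sum_filter, Fin.sum_univ_three, star_qi, qp, add_mul, mul_add,
      qi_mul_qi] <;>
    grind

lemma ip3_ln_ln (s t : Fin 7) : ip3 (Ln s) (Ln t) = if s = t then -2 else 0 := by
  fin_cases s <;> fin_cases t <;>
    simp only [Ln, Fin.reduceFinMk, Matrix.cons_val, ip3_rootF_right, ip3_rootB_right,
      ip3_rootD_right] <;>
    simp [rootF, rootB, rootD, Fin.sum_univ_three, star_qi, qp, add_mul, sub_mul, mul_sub,
      qi_mul_qi] <;>
    grind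

lemma ip3_pt_ln (s t : Fin 7) : ip3 (Pt s) (Ln t) = if Incident s t then qp else 0 := by
  fin_cases s <;> fin_cases t <;>
    simp only [Pt, Ln, Fin.reduceFinMk, Matrix.cons_val, ip3_rootF_right, ip3_rootB_right,
      ip3_rootD_right] <;>
    simp [rootA, rootC, rootE, Incident, Fin.sum_univ_three, star_qi, qp] <;>
    grind

lemma ip3_ln_pt (s t : Fin 7) : ip3 (Ln t) (Pt s) = if Incident s t then star qp else 0 := by
  rw [← star_ip3, ip3_pt_ln, apply_ite star, star_zero]

lemma ip3_pt_ln_eq_qp_iff {s t : Fin 7} : ip3 (Pt s) (Ln t) = qp ↔ Incident s t := by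
  rw [ip3_pt_ln, ite_eq_left_iff, imp_iff_not qp_ne_zero.symm, not_not]

lemma ip3_ln_xi_ln_xi (s t : Fin 7) :
    ip3 (rmul3 (Ln s) xi) (rmul3 (Ln t) xi) = if s = t then -2 else 0 := by
  rw [ip3_rmul3_left, ip3_rmul3_right, ip3_ln_ln]
  split_ifs
  · rw [neg_mul, mul_neg, two_mul, mul_add, star_xi_mul_xi, one_add_one_eq_two]
  · rw [zero_mul, mul_zero]

lemma ip3_pt_ln_xi (s t : Fin 7) :
    ip3 (Pt s) (rmul3 (Ln t) xi) = if Incident s t then sqrt2 else 0 := by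
  rw [ip3_rmul3_right, ip3_pt_ln, ite_mul, qp_mul_xi, zero_mul]

lemma ip3_ln_xi_pt (s t : Fin 7) :
    ip3 (rmul3 (Ln t) xi) (Pt s) = if Incident s t then sqrt2 else 0 := by
  rw [← star_ip3, ip3_pt_ln_xi, apply_ite star, star_sqrt2, star_zero]

end Diagram

section WeylVector

lemma sum_rho : ∑ t, rho t = ∑ t, Pt t + ∑ t, rmul3 (Ln t) xi :=
  Fin.sum_univ_add (a := 7) (b := 7) rho

lemma ip3_sum_rho_pt (s : Fin 7) : ip3 (∑ t, rho t) (Pt s) = -2 + 3 * sqrt2 := by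
  simp only [sum_rho, ip3_add_left, ip3_sum_left, ip3_pt_pt, ip3_ln_xi_pt]
  rw [sum_ite_eq' univ s, if_pos (mem_univ s), ← sum_filter, sum_const, card_lines_through,
    nsmul_eq_mul, Nat.cast_ofNat]

lemma ip3_sum_rho_ln_xi (t : Fin 7) :
    ip3 (∑ s, rho s) (rmul3 (Ln t) xi) = -2 + 3 * sqrt2 := by
  simp only [sum_rho, ip3_add_left, ip3_sum_left, ip3_ln_xi_ln_xi, ip3_pt_ln_xi]
  rw [sum_ite_eq' univ t, if_pos (mem_univ t), ← sum_filter, sum_const, card_points_on,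
    nsmul_eq_mul, Nat.cast_ofNat, add_comm]

lemma ip3_sum_rho_rho (s : Fin 14) : ip3 (∑ t, rho t) (rho s) = -2 + 3 * sqrt2 := by
  rw [rho]
  split
  · exact ip3_sum_rho_pt _
  · exact ip3_sum_rho_ln_xi _

lemma inv_fourteen_smul_neg_two_add_three_mul_sqrt2 :
    (14 : ℝ)⁻¹ • (-2 + 3 * sqrt2) = ((2 + 3 * √2 : ℝ) : Quat)⁻¹ := by
  have hmul : (-2 + 3 * √2) * (2 + 3 * √2) = 14 := by
    linear_combination 9 * Real.mul_self_sqrt zero_le_two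
  have hinv : (14 : ℝ)⁻¹ * (-2 + 3 * √2) = (2 + 3 * √2)⁻¹ := by
    apply eq_inv_of_mul_eq_one_left
    rw [mul_assoc, hmul, inv_mul_cancel₀ (by norm_num)]
  rw [sqrt2, ← Quaternion.coe_inv, ← hinv, Quaternion.coe_mul, Quaternion.coe_mul_eq_smul]
  push_cast
  rfl

lemma ip3_rhobar_rho (s : Fin 14) : ip3 rhobar (rho s) = ((2 + 3 * √2 : ℝ) : Quat)⁻¹ := by
  rw [rhobar, ip3_smul_left, ip3_sum_rho_rho, inv_fourteen_smul_neg_two_add_three_mul_sqrt2]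

lemma ip3_rhobar_rhobar : ip3 rhobar rhobar = ((2 + 3 * √2 : ℝ) : Quat)⁻¹ := by
  calc
    ip3 rhobar rhobar = ip3 rhobar ((14 : ℝ)⁻¹ • ∑ s, rho s) := rfl
    _ = (14 : ℝ)⁻¹ • ∑ s, ip3 rhobar (rho s) := by rw [ip3_smul_right, ip3_sum_right]
    _ = (14 : ℝ)⁻¹ • ∑ _s : Fin 14, ((2 + 3 * √2 : ℝ) : Quat)⁻¹ := by simp only [ip3_rhobar_rho]
    _ = ((2 + 3 * √2 : ℝ) : Quat)⁻¹ := by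
      rw [sum_const, card_univ, Fintype.card_fin, ← Nat.cast_smul_eq_nsmul ℝ, Nat.cast_ofNat,
        inv_smul_smul₀ (by norm_num)]

lemma rho_castAdd (s : Fin 7) : rho (Fin.castAdd 7 s) = Pt s := by
  simp [rho]

lemma rho_natAdd (t : Fin 7) : rho (Fin.natAdd 7 t) = rmul3 (Ln t) xi := by
  simp [rho]

lemma ip3_rhobar_pt (s : Fin 7) : ip3 rhobar (Pt s) = ((2 + 3 * √2 : ℝ) : Quat)⁻¹ :=
  rho_castAdd s ▸ ip3_rhobar_rho _

lemma ip3_rhobar_ln_xi (t : Fin 7) :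
    ip3 rhobar (rmul3 (Ln t) xi) = ((2 + 3 * √2 : ℝ) : Quat)⁻¹ :=
  rho_natAdd t ▸ ip3_rhobar_rho _

end WeylVector

section CuspVectors

lemma wPof_eq (t : Fin 7) :
    wPof t = rmul3 (Ln t) (star qp) + ∑ s with Incident s t, Pt s := by
  simp only [wPof, ip3_pt_ln_eq_qp_iff, sum_filter]

lemma wLof_eq (s : Fin 7) : wLof s = rmul3 (Pt s) qp + ∑ t with Incident s t, Ln t := by
  simp only [wLof, ip3_pt_ln_eq_qp_iff, sum_filter]

lemma ip3_wPof_self (t : Fin 7) : ip3 (wPof t) (wPof t) = 2 := by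
  rw [wPof_eq, ip3_self_rmul3_star_add_sum (n := -2), card_points_on, normSq_qp]
  · norm_num
  · simp [ip3_ln_ln]
  · simp [ip3_pt_pt]
  · simp [ip3_pt_ln_eq_qp_iff]

lemma ip3_wLof_self (s : Fin 7) : ip3 (wLof s) (wLof s) = 2 := by
  rw [wLof_eq, ← star_star qp, ip3_self_rmul3_star_add_sum (n := -2), card_lines_through,
    Quaternion.normSq_star, normSq_qp]
  · norm_num
  · simp [ip3_pt_pt]
  · simp [ip3_ln_ln]
  · simp +contextual [ip3_ln_pt]

lemma inv_two_add_three_mul_sqrt_two_mul :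
    ((2 + 3 * √2 : ℝ) : Quat)⁻¹ * (sqrt2 + 3) = sqrt2⁻¹ := by
  have hfactor : 2 + 3 * √2 = (√2 + 3) * √2 := by
    linear_combination -Real.mul_self_sqrt zero_le_two
  have hinv : (2 + 3 * √2)⁻¹ * (√2 + 3) = (√2)⁻¹ := by
    rw [hfactor, mul_inv_rev, inv_mul_cancel_right₀ (by positivity)]
  rw [sqrt2]
  exact_mod_cast congrArg ((↑) : ℝ → Quat) hinv

lemma ip3_rhobar_wPof (t : Fin 7) : ip3 rhobar (wPof t) = sqrt2⁻¹ := by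
  rw [wPof_eq, ← xi_mul_sqrt2, ← rmul3_rmul3, ip3_add_right, ip3_rmul3_right, ip3_sum_right,
    ip3_rhobar_ln_xi, sum_congr rfl fun s _ => ip3_rhobar_pt s, sum_const, card_points_on,
    nsmul_eq_mul', ← mul_add]
  exact inv_two_add_three_mul_sqrt_two_mul

lemma ip3_rhobar_wLof_xi (s : Fin 7) : ip3 rhobar (rmul3 (wLof s) xi) = sqrt2⁻¹ := by
  have hline (t : Fin 7) : ip3 rhobar (Ln t) * xi = ((2 + 3 * √2 : ℝ) : Quat)⁻¹ := by
    rw [← ip3_rmul3_right, ip3_rhobar_ln_xi]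
  rw [wLof_eq, ip3_rmul3_right, ip3_add_right, ip3_sum_right, add_mul, sum_mul, ip3_rmul3_right,
    ip3_rhobar_pt, mul_assoc, qp_mul_xi, sum_congr rfl fun t _ => hline t, sum_const,
    card_lines_through, nsmul_eq_mul', ← mul_add]
  exact inv_two_add_three_mul_sqrt_two_mul

end CuspVectors

/-- Inner products among the special vectors:
(i) `⟨ρ_s,ρ_t⟩ = √2` for joined nodes of `D` and `0` otherwise;
(ii) `⟨ρ̄,ρ_s⟩ = ⟨ρ̄,ρ̄⟩ = 1/(2+3√2)`;
(iii) `⟨w_P,w_P⟩ = ⟨w_L,w_L⟩ = 2` and `⟨ρ̄,w_P⟩ = ⟨ρ̄,w_Lξ⟩ = 1/√2`. -/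
theorem inner_products_of_special_vectors :
    (∀ s t : Fin 7,
      (s ≠ t → ip3 (Pt s) (Pt t) = 0 ∧ ip3 (rmul3 (Ln s) xi) (rmul3 (Ln t) xi) = 0) ∧
      (ip3 (Pt s) (Ln t) = qp →
        ip3 (Pt s) (rmul3 (Ln t) xi) = sqrt2 ∧ ip3 (rmul3 (Ln t) xi) (Pt s) = sqrt2) ∧
      (ip3 (Pt s) (Ln t) = 0 →
        ip3 (Pt s) (rmul3 (Ln t) xi) = 0 ∧ ip3 (rmul3 (Ln t) xi) (Pt s) = 0)) ∧
    (∀ s : Fin 14, ip3 rhobar (rho s) = ((2 + 3 * Real.sqrt 2 : ℝ) : Quat)⁻¹) ∧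
    (ip3 rhobar rhobar = ((2 + 3 * Real.sqrt 2 : ℝ) : Quat)⁻¹) ∧
    (ip3 wP wP = 2 ∧ ip3 wL wL = 2) ∧
    (ip3 rhobar wP = sqrt2⁻¹ ∧ ip3 rhobar (rmul3 wL xi) = sqrt2⁻¹) := by
  refine ⟨fun s t => ⟨fun hst => ?_, fun h => ?_, fun h => ?_⟩, ip3_rhobar_rho,
    ip3_rhobar_rhobar, ⟨ip3_wPof_self 0, ip3_wLof_self 0⟩, ip3_rhobar_wPof 0, ip3_rhobar_wLof_xi 0⟩
  · rw [ip3_pt_pt, ip3_ln_xi_ln_xi, if_neg hst]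
    exact ⟨rfl, rfl⟩
  · have hinc : Incident s t := ip3_pt_ln_eq_qp_iff.mp h
    rw [ip3_pt_ln_xi, ip3_ln_xi_pt, if_pos hinc]
    exact ⟨rfl, rfl⟩
  · have hinc : ¬Incident s t := fun hinc =>
      qp_ne_zero ((ip3_pt_ln_eq_qp_iff.mpr hinc).symm.trans h)
    rw [ip3_pt_ln_xi, ip3_ln_xi_pt, if_neg hinc]
    exact ⟨rfl, rfl⟩
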